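/- Let p > 0, ρ > 0, and let x† = f_p(T*T)w with ‖w‖ ≤ ρ. Then there exist C > 0 and δ̄ ∈ (0,1) such that for every δ ∈ (0,δ̄] and every y^δ ∈ Y with ‖y^δ − T x†‖ ≤ δ, the regularized solution x(δ) = g_δ(T*T)T*y^δ obtained with the a-priori parameter choice α(δ) = δ satisfies ‖x† − x(δ)‖ ≤ C·(−ln δ)^{−p}. -/

import Mathlib

open ContinuousLinearMap

/-- The generator function `g_α(λ) = 1/(λ + (1 − λ^{√α})²)` with `g_α(0) = 1`,
where `λ^{√α} = exp(√α · log λ)`. -/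
noncomputable def genFun (α : ℝ) : ℝ → ℝ := fun t =>
  if t = 0 then 1 else 1 / (t + (1 - Real.exp (Real.sqrt α * Real.log t)) ^ 2)

/-- `f_p(λ) = (−log λ)^{−p}` (with `f_p(0) = 0`). -/
noncomputable def fpFun (p : ℝ) : ℝ → ℝ := fun t => (-Real.log t) ^ (-p)

/- With `A = T*T`, `r_α(λ) = 1 - λ g_α(λ)` and `y = T x† + (y - T x†)`,
`x† - g_α(A) T* y = r_α(A) f_p(A) w - g_α(A) T* (y - T x†)`.
The functional calculus reduces both terms to scalar bounds on `[0, e⁻¹]`. Put `u = 1 - λ^{√α}`, so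
that `√α / 2 ≤ u ≤ √α (-log λ)`. By AM-GM, `√λ g_α(λ) = √λ / (λ + u²) ≤ 1 / (2u) ≤ 1 / √α`.
In `r_α(λ) f_p(λ) = u² / (λ + u²) · f_p(λ)` split at `λ = √α`: to the left `r_α ≤ 1` and
`f_p(λ) ≤ f_p(√α) = 2^p f_p(α)`; to the right `f_p ≤ 1` and `r_α(λ) ≤ u² / λ ≤ √α (log α)² / 4`.
For `α = δ` the powers of `δ` that remain are negligible against `f_p(δ) = (-log δ)^{-p}`. -/

open Filter Set Topology

/-- The residual function `r(λ) = 1 - λ g(λ)` of a spectral regularization method with generator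
function `g`; its values on the spectrum of `T*T` govern the regularization bias. -/
def residualFun (g : ℝ → ℝ) (t : ℝ) : ℝ := 1 - t * g t

section SpectralRegularization

variable {X Y : Type*} [NormedAddCommGroup X] [InnerProductSpace ℂ X] [CompleteSpace X]
  [NormedAddCommGroup Y] [InnerProductSpace ℂ Y] [CompleteSpace Y] (T : X →L[ℂ] Y)
  {f g : ℝ → ℝ} {b c : ℝ}

lemma spectrum_adjoint_comp_self_subset_Icc :
    spectrum ℝ (adjoint T ∘L T) ⊆ Icc 0 ‖adjoint T ∘L T‖ := by
  intro t ht
  have hnonneg : 0 ≤ adjoint T ∘L T :=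
    (nonneg_iff_isPositive _).2 (isPositive_adjoint_comp_self T)
  refine ⟨spectrum_nonneg_of_nonneg hnonneg ht, (le_abs_self t).trans ?_⟩
  exact (spectrum.norm_le_norm_mul_of_mem ht).trans
    (mul_le_of_le_one_right (norm_nonneg _) norm_id_le)

lemma cfc_sub_cfc_mul_mul_cfc {R : Type*} [Ring R] [StarRing R] [TopologicalSpace R]
    [Algebra ℝ R] [ContinuousFunctionalCalculus ℝ R IsSelfAdjoint] {a : R} (ha : IsSelfAdjoint a)
    (hf : ContinuousOn f (spectrum ℝ a)) (hg : ContinuousOn g (spectrum ℝ a)) :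
    cfc f a - cfc g a * a * cfc f a = cfc (fun t ↦ residualFun g t * f t) a := by
  have hgid : ContinuousOn (fun t ↦ g t * t) (spectrum ℝ a) := hg.mul continuousOn_id
  calc cfc f a - cfc g a * a * cfc f a
      = cfc (fun t ↦ f t - g t * t * f t) a := by
        rw [cfc_sub f (fun t ↦ g t * t * f t) a hf (hgid.mul hf),
          cfc_mul (fun t ↦ g t * t) f a hgid hf, cfc_mul g (fun t ↦ t) a hg continuousOn_id,
          cfc_id' ℝ a]
    _ = cfc (fun t ↦ residualFun g t * f t) a := by
        congr 1
        funext t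
        rw [residualFun]
        ring

lemma adjoint_comp_cfc_adjoint_comp_self :
    adjoint (T ∘L cfc g (adjoint T ∘L T)) = cfc g (adjoint T ∘L T) ∘L adjoint T := by
  rw [adjoint_comp]
  congr 1
  exact (cfc_predicate g (adjoint T ∘L T) : IsSelfAdjoint _)

lemma norm_cfc_comp_adjoint_le (hg : ContinuousOn g (spectrum ℝ (adjoint T ∘L T))) (hc : 0 ≤ c)
    (hgc : ∀ t ∈ spectrum ℝ (adjoint T ∘L T), √t * |g t| ≤ c) :
    ‖cfc g (adjoint T ∘L T) ∘L adjoint T‖ ≤ c := by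
  set A := adjoint T ∘L T
  have hsa : IsSelfAdjoint A := (isPositive_adjoint_comp_self T).isSelfAdjoint
  have hcfc : cfc g A * A * cfc g A = cfc (fun t ↦ g t * t * g t) A := by
    rw [cfc_mul (fun t ↦ g t * t) g A (hg.mul continuousOn_id) hg,
      cfc_mul g (fun t ↦ t) A hg continuousOn_id, cfc_id' ℝ A]
  have hnorm : ‖T ∘L cfc g A‖ * ‖T ∘L cfc g A‖ = ‖cfc g A * A * cfc g A‖ := by
    rw [← norm_adjoint_comp_self, adjoint_comp_cfc_adjoint_comp_self]
    rfl
  have hbound : ‖cfc g A * A * cfc g A‖ ≤ c * c := by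
    rw [hcfc]
    refine norm_cfc_le (mul_self_nonneg c) fun t ht ↦ ?_
    have ht0 : 0 ≤ t := (spectrum_adjoint_comp_self_subset_Icc T ht).1
    calc ‖g t * t * g t‖ = (√t * |g t|) * (√t * |g t|) := by
          rw [norm_mul, norm_mul, Real.norm_of_nonneg ht0, Real.norm_eq_abs,
            mul_mul_mul_comm, Real.mul_self_sqrt ht0]
          ring
      _ ≤ c * c := mul_self_le_mul_self (by positivity) (hgc t ht)
  calc ‖cfc g A ∘L adjoint T‖ = ‖T ∘L cfc g A‖ := by
        rw [← adjoint_comp_cfc_adjoint_comp_self, LinearIsometryEquiv.norm_map]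
    _ ≤ c := (mul_self_le_mul_self_iff (norm_nonneg _) hc).2 (hnorm.trans_le hbound)

theorem norm_cfc_apply_sub_cfc_adjoint_apply_le
    (hf : ContinuousOn f (spectrum ℝ (adjoint T ∘L T)))
    (hg : ContinuousOn g (spectrum ℝ (adjoint T ∘L T))) (hb : 0 ≤ b) (hc : 0 ≤ c)
    (hbias : ∀ t ∈ spectrum ℝ (adjoint T ∘L T), |residualFun g t * f t| ≤ b)
    (hnoise : ∀ t ∈ spectrum ℝ (adjoint T ∘L T), √t * |g t| ≤ c) (w : X) (y : Y) :
    ‖cfc f (adjoint T ∘L T) w - cfc g (adjoint T ∘L T) (adjoint T y)‖ ≤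
      b * ‖w‖ + c * ‖y - T (cfc f (adjoint T ∘L T) w)‖ := by
  set A := adjoint T ∘L T with hA
  have hsa : IsSelfAdjoint A := (isPositive_adjoint_comp_self T).isSelfAdjoint
  have hsplit : cfc f A w - cfc g A (adjoint T y) =
      cfc (fun t ↦ residualFun g t * f t) A w -
        (cfc g A ∘L adjoint T) (y - T (cfc f A w)) := by
    rw [← cfc_sub_cfc_mul_mul_cfc hsa hf hg, map_sub]
    simp [hA]
  rw [hsplit]
  exact (norm_sub_le _ _).trans <| add_le_add
    (le_of_opNorm_le _ (norm_cfc_le hb hbias) w)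
    (le_of_opNorm_le _ (norm_cfc_comp_adjoint_le T hg hc hnoise) _)

end SpectralRegularization

section SourceFunction

variable {p t : ℝ}

lemma fpFun_zero (hp : p ≠ 0) : fpFun p 0 = 0 := by
  rw [fpFun, Real.log_zero, neg_zero, Real.zero_rpow (neg_ne_zero.2 hp)]

lemma fpFun_nonneg (ht : t ∈ Icc 0 1) : 0 ≤ fpFun p t :=
  Real.rpow_nonneg (neg_nonneg.2 (Real.log_nonpos ht.1 ht.2)) _

lemma monotoneOn_fpFun (hp : 0 < p) : MonotoneOn (fpFun p) (Ico 0 1) := by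
  intro x hx y hy hxy
  rcases hx.1.eq_or_lt with rfl | hx0
  · rw [fpFun_zero hp.ne']
    exact fpFun_nonneg (Ico_subset_Icc_self hy)
  · have hy0 : 0 < y := hx0.trans_le hxy
    exact Real.rpow_le_rpow_of_nonpos (neg_pos.2 (Real.log_neg hy0 hy.2))
      (neg_le_neg (Real.log_le_log hx0 hxy)) (neg_nonpos.2 hp.le)

lemma continuousOn_fpFun (hp : 0 < p) : ContinuousOn (fpFun p) (Ico 0 1) := by
  intro t ht
  apply ContinuousAt.continuousWithinAt
  rcases ht.1.eq_or_lt with rfl | ht0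
  · rw [continuousAt_iff_punctured_nhds, fpFun_zero hp.ne']
    exact (tendsto_rpow_neg_atTop hp).comp
      (tendsto_neg_atBot_atTop.comp Real.tendsto_log_nhdsNE_zero)
  · exact (Real.continuousAt_log ht0.ne').neg.rpow_const
      (Or.inl (neg_ne_zero.2 (Real.log_neg ht0 ht.2).ne))

lemma fpFun_le_one (hp : 0 < p) (ht : t ∈ Icc 0 (Real.exp (-1))) : fpFun p t ≤ 1 := by
  have he : Real.exp (-1) < 1 := Real.exp_lt_one_iff.2 neg_one_lt_zero
  calc fpFun p t ≤ fpFun p (Real.exp (-1)) :=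
        monotoneOn_fpFun hp ⟨ht.1, ht.2.trans_lt he⟩ ⟨(Real.exp_pos _).le, he⟩ ht.2
    _ = 1 := by rw [fpFun, Real.log_exp, neg_neg, Real.one_rpow]

lemma fpFun_sqrt (ht : t ∈ Icc 0 1) : fpFun p √t = 2 ^ p * fpFun p t := by
  rw [fpFun, fpFun, Real.log_sqrt ht.1, ← neg_div,
    Real.div_rpow (neg_nonneg.2 (Real.log_nonpos ht.1 ht.2)) zero_le_two,
    Real.rpow_neg zero_le_two, div_inv_eq_mul, mul_comm]

lemma eventually_sqrt_mul_log_sq_le_fpFun (p : ℝ) :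
    ∀ᶠ δ in 𝓝[>] 0, √δ * Real.log δ ^ 2 ≤ fpFun p δ := by
  filter_upwards [(isLittleO_abs_log_rpow_rpow_nhdsGT_zero (p + 2)
    (by norm_num : -(1 / 2 : ℝ) < 0)).bound one_pos, Ioo_mem_nhdsGT one_pos] with δ hlog hδ
  have hL : 0 < -Real.log δ := neg_pos.2 (Real.log_neg hδ.1 hδ.2)
  have hs : 0 < √δ := Real.sqrt_pos.2 hδ.1
  have hpow : (-Real.log δ) ^ p * Real.log δ ^ 2 ≤ (√δ)⁻¹ := by
    rwa [abs_of_neg (neg_pos.1 hL), Real.rpow_neg hδ.1.le, ← Real.sqrt_eq_rpow, one_mul,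
      Real.norm_of_nonneg (by positivity), Real.norm_of_nonneg (by positivity),
      Real.rpow_add hL, Real.rpow_two, neg_sq] at hlog
  rw [fpFun, Real.rpow_neg hL.le, ← one_div, le_div_iff₀ (by positivity)]
  calc √δ * Real.log δ ^ 2 * (-Real.log δ) ^ p
      = √δ * ((-Real.log δ) ^ p * Real.log δ ^ 2) := by ring
    _ ≤ √δ * (√δ)⁻¹ := by gcongr
    _ = 1 := mul_inv_cancel₀ hs.ne'

end SourceFunction

section Generator

variable {α s t : ℝ}

lemma half_le_one_sub_rpow (hs : s ∈ Icc 0 1) (ht : t ∈ Icc 0 (Real.exp (-1))) :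
    s / 2 ≤ 1 - t ^ s := by
  have hs1 : 0 < 1 + s := by linarith [hs.1]
  have hrpow : t ^ s ≤ 1 - s / 2 := calc
    t ^ s ≤ Real.exp (-1) ^ s := Real.rpow_le_rpow ht.1 ht.2 hs.1
    _ = (Real.exp s)⁻¹ := by rw [← Real.exp_mul, neg_one_mul, Real.exp_neg]
    _ ≤ (1 + s)⁻¹ := inv_anti₀ hs1 (by linarith [Real.add_one_le_exp s])
    _ ≤ 1 - s / 2 := by
      rw [inv_le_iff_one_le_mul₀ hs1]
      nlinarith [mul_nonneg hs.1 (sub_nonneg.2 hs.2)]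
  linarith

lemma one_sub_rpow_le_mul_neg_log (ht : 0 < t) : 1 - t ^ s ≤ s * -Real.log t := by
  have hlog := Real.log_le_sub_one_of_pos (Real.rpow_pos_of_pos ht s)
  rw [Real.log_rpow ht] at hlog
  linarith

lemma add_one_sub_rpow_sq_pos (hs : s ≠ 0) (ht : 0 ≤ t) : 0 < t + (1 - t ^ s) ^ 2 := by
  rcases ht.eq_or_lt with rfl | ht0
  · simp [Real.zero_rpow hs]
  · positivity

lemma genFun_eq (hα : 0 < α) (ht : 0 ≤ t) : genFun α t = 1 / (t + (1 - t ^ √α) ^ 2) := by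
  rcases ht.eq_or_lt with rfl | ht0
  · simp [genFun, Real.zero_rpow (Real.sqrt_pos.2 hα).ne']
  · rw [genFun, if_neg ht0.ne', Real.rpow_def_of_pos ht0, mul_comm (√α)]

lemma genFun_nonneg (hα : 0 < α) (ht : 0 ≤ t) : 0 ≤ genFun α t := by
  rw [genFun_eq hα ht]
  positivity

lemma continuousOn_genFun (hα : 0 < α) : ContinuousOn (genFun α) (Ici 0) := by
  have hrpow : Continuous fun t : ℝ ↦ t ^ √α := Real.continuous_rpow_const (Real.sqrt_nonneg α)
  have hdenom : Continuous fun t : ℝ ↦ t + (1 - t ^ √α) ^ 2 := by fun_prop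
  exact (continuousOn_const.div hdenom.continuousOn fun t ht ↦
    (add_one_sub_rpow_sq_pos (Real.sqrt_pos.2 hα).ne' ht).ne').congr fun t ht ↦ genFun_eq hα ht

lemma sqrt_mul_genFun_le (hα : α ∈ Ioc 0 1) (ht : t ∈ Icc 0 (Real.exp (-1))) :
    √t * genFun α t ≤ 1 / √α := by
  have hs : 0 < √α := Real.sqrt_pos.2 hα.1
  have hu : √α / 2 ≤ 1 - t ^ √α :=
    half_le_one_sub_rpow ⟨hs.le, Real.sqrt_le_one.2 hα.2⟩ ht
  have hdenom := add_one_sub_rpow_sq_pos hs.ne' ht.1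
  rw [genFun_eq hα.1 ht.1, mul_one_div, div_le_div_iff₀ hdenom hs, one_mul]
  set u := 1 - t ^ √α
  calc √t * √α ≤ √t * (2 * u) := by gcongr; linarith
    _ = 2 * √t * u := by ring
    _ ≤ √t ^ 2 + u ^ 2 := two_mul_le_add_sq _ _
    _ = t + u ^ 2 := by rw [Real.sq_sqrt ht.1]

lemma residualFun_genFun (hα : 0 < α) (ht : 0 ≤ t) :
    residualFun (genFun α) t = (1 - t ^ √α) ^ 2 / (t + (1 - t ^ √α) ^ 2) := by
  have hdenom := add_one_sub_rpow_sq_pos (Real.sqrt_pos.2 hα).ne' ht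
  rw [residualFun, genFun_eq hα ht]
  field_simp
  ring

lemma residualFun_genFun_nonneg (hα : 0 < α) (ht : 0 ≤ t) : 0 ≤ residualFun (genFun α) t := by
  rw [residualFun_genFun hα ht]
  positivity

lemma residualFun_genFun_le_one (hα : 0 < α) (ht : 0 ≤ t) : residualFun (genFun α) t ≤ 1 :=
  sub_le_self 1 (mul_nonneg ht (genFun_nonneg hα ht))

lemma residualFun_genFun_le_mul_log_sq_div (hα : 0 < α) (ht : t ∈ Ioc 0 1) :
    residualFun (genFun α) t ≤ α * Real.log t ^ 2 / t := by
  have hu : 0 ≤ 1 - t ^ √α :=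
    sub_nonneg.2 (Real.rpow_le_one ht.1.le ht.2 (Real.sqrt_nonneg α))
  have ht0 : 0 < t := ht.1
  calc residualFun (genFun α) t
      = (1 - t ^ √α) ^ 2 / (t + (1 - t ^ √α) ^ 2) := residualFun_genFun hα ht.1.le
    _ ≤ (1 - t ^ √α) ^ 2 / t := by gcongr; exact le_add_of_nonneg_right (sq_nonneg _)
    _ ≤ (√α * -Real.log t) ^ 2 / t := by gcongr; exact one_sub_rpow_le_mul_neg_log ht.1
    _ = α * Real.log t ^ 2 / t := by rw [mul_pow, Real.sq_sqrt hα.le, neg_sq]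

lemma residualFun_genFun_le_sqrt_mul_log_sq (hα : 0 < α) (ht : t ∈ Icc √α 1) :
    residualFun (genFun α) t ≤ √α * (Real.log α ^ 2 / 4) := by
  have hs : 0 < √α := Real.sqrt_pos.2 hα
  have ht0 : 0 < t := hs.trans_le ht.1
  have hlog : Real.log t ^ 2 ≤ Real.log √α ^ 2 := by
    rw [← neg_sq, ← neg_sq (Real.log √α)]
    exact pow_le_pow_left₀ (neg_nonneg.2 (Real.log_nonpos ht0.le ht.2))
      (neg_le_neg (Real.log_le_log hs ht.1)) 2
  calc residualFun (genFun α) t ≤ α * Real.log t ^ 2 / t :=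
        residualFun_genFun_le_mul_log_sq_div hα ⟨ht0, ht.2⟩
    _ ≤ α * Real.log √α ^ 2 / √α := by gcongr; exact ht.1
    _ = √α * (Real.log α ^ 2 / 4) := by
      rw [mul_div_right_comm, Real.div_sqrt, Real.log_sqrt hα.le]
      ring

lemma residualFun_genFun_mul_fpFun_le {p : ℝ} (hp : 0 < p) (hα : α ∈ Ioo 0 1)
    (ht : t ∈ Icc 0 (Real.exp (-1))) :
    residualFun (genFun α) t * fpFun p t ≤
      2 ^ p * fpFun p α + √α * (Real.log α ^ 2 / 4) := by
  have ht1 : t < 1 := ht.2.trans_lt (Real.exp_lt_one_iff.2 neg_one_lt_zero)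
  have hs1 : √α < 1 := by simpa using Real.sqrt_lt_sqrt hα.1.le hα.2
  have hf : 0 ≤ fpFun p t := fpFun_nonneg ⟨ht.1, ht1.le⟩
  have hfα : 0 ≤ fpFun p α := fpFun_nonneg ⟨hα.1.le, hα.2.le⟩
  rcases le_total t √α with hle | hge
  · calc residualFun (genFun α) t * fpFun p t ≤ 1 * fpFun p √α :=
          mul_le_mul (residualFun_genFun_le_one hα.1 ht.1)
            (monotoneOn_fpFun hp ⟨ht.1, ht1⟩ ⟨Real.sqrt_nonneg α, hs1⟩ hle) hf zero_le_one
      _ = 2 ^ p * fpFun p α := by rw [one_mul, fpFun_sqrt ⟨hα.1.le, hα.2.le⟩]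
      _ ≤ _ := le_add_of_nonneg_right (by positivity)
  · calc residualFun (genFun α) t * fpFun p t ≤ √α * (Real.log α ^ 2 / 4) * 1 :=
          mul_le_mul (residualFun_genFun_le_sqrt_mul_log_sq hα.1 ⟨hge, ht1.le⟩)
            (fpFun_le_one hp ht) hf (by positivity)
      _ ≤ _ := by rw [mul_one]; exact le_add_of_nonneg_left (by positivity)

end Generator

theorem norm_cfc_fpFun_apply_sub_cfc_genFun_adjoint_apply_le {X Y : Type*}
    [NormedAddCommGroup X] [InnerProductSpace ℂ X] [CompleteSpace X]
    [NormedAddCommGroup Y] [InnerProductSpace ℂ Y] [CompleteSpace Y]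
    (T : X →L[ℂ] Y) (hT : ‖adjoint T ∘L T‖ ≤ Real.exp (-1)) {p α : ℝ} (hp : 0 < p)
    (hα : α ∈ Ioo 0 1) (w : X) (y : Y) :
    ‖cfc (fpFun p) (adjoint T ∘L T) w - cfc (genFun α) (adjoint T ∘L T) (adjoint T y)‖ ≤
      (2 ^ p * fpFun p α + √α * (Real.log α ^ 2 / 4)) * ‖w‖ +
        1 / √α * ‖y - T (cfc (fpFun p) (adjoint T ∘L T) w)‖ := by
  have he : Real.exp (-1) < 1 := Real.exp_lt_one_iff.2 neg_one_lt_zero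
  have hspec : spectrum ℝ (adjoint T ∘L T) ⊆ Icc 0 (Real.exp (-1)) :=
    (spectrum_adjoint_comp_self_subset_Icc T).trans (Icc_subset_Icc_right hT)
  have hfα : 0 ≤ fpFun p α := fpFun_nonneg ⟨hα.1.le, hα.2.le⟩
  refine norm_cfc_apply_sub_cfc_adjoint_apply_le T
    ((continuousOn_fpFun hp).mono fun t ht ↦ ⟨(hspec ht).1, (hspec ht).2.trans_lt he⟩)
    ((continuousOn_genFun hα.1).mono fun t ht ↦ (hspec ht).1)
    (by positivity) (by positivity) (fun t ht ↦ ?_) (fun t ht ↦ ?_) w y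
  · have hf : 0 ≤ fpFun p t := fpFun_nonneg ⟨(hspec ht).1, (hspec ht).2.trans he.le⟩
    rw [abs_of_nonneg (mul_nonneg (residualFun_genFun_nonneg hα.1 (hspec ht).1) hf)]
    exact residualFun_genFun_mul_fpFun_le hp hα (hspec ht)
  · rw [abs_of_nonneg (genFun_nonneg hα.1 (hspec ht).1)]
    exact sqrt_mul_genFun_le ⟨hα.1, hα.2.le⟩ (hspec ht)

theorem stmt10_general {p ρ : ℝ} (hp : 0 < p) (hρ : 0 < ρ) :
    ∃ C > (0 : ℝ), ∃ δbar ∈ Ioo (0 : ℝ) 1,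
      ∀ {X Y : Type*} [NormedAddCommGroup X] [InnerProductSpace ℂ X] [CompleteSpace X]
        [NormedAddCommGroup Y] [InnerProductSpace ℂ Y] [CompleteSpace Y] (T : X →L[ℂ] Y),
        ‖adjoint T ∘L T‖ ≤ Real.exp (-1) → ∀ w : X, ‖w‖ ≤ ρ → ∀ δ ∈ Ioc 0 δbar, ∀ yδ : Y,
          ‖yδ - T (cfc (fpFun p) (adjoint T ∘L T) w)‖ ≤ δ →
            ‖cfc (fpFun p) (adjoint T ∘L T) w -
                cfc (genFun δ) (adjoint T ∘L T) (adjoint T yδ)‖ ≤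
              C * (-Real.log δ) ^ (-p) := by
  have hexp : ∀ᶠ δ : ℝ in 𝓝[>] 0, δ ∈ Ioc 0 (Real.exp (-1)) := Ioc_mem_nhdsGT (Real.exp_pos _)
  obtain ⟨δbar, hδbar, hsub⟩ := mem_nhdsGT_iff_exists_Ioc_subset.1
    (hexp.and (eventually_sqrt_mul_log_sq_le_fpFun p))
  have hlt : δbar < 1 :=
    (hsub ⟨hδbar, le_rfl⟩).1.2.trans_lt (Real.exp_lt_one_iff.2 neg_one_lt_zero)
  refine ⟨(2 ^ p + 1 / 4) * ρ + 1, by positivity, δbar, ⟨hδbar, hlt⟩, ?_⟩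
  intro X Y _ _ _ _ _ _ T hT w hw δ hδ yδ hy
  obtain ⟨⟨-, hδe⟩, hrate⟩ := hsub hδ
  have hlog : 1 ≤ Real.log δ ^ 2 := by
    have : Real.log δ ≤ -1 := (Real.log_le_iff_le_exp hδ.1).2 hδe
    nlinarith
  have hsqrt : √δ ≤ fpFun p δ := (le_mul_of_one_le_right (Real.sqrt_nonneg δ) hlog).trans hrate
  have hf : 0 ≤ fpFun p δ := (Real.sqrt_nonneg δ).trans hsqrt
  calc ‖cfc (fpFun p) (adjoint T ∘L T) w - cfc (genFun δ) (adjoint T ∘L T) (adjoint T yδ)‖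
      ≤ (2 ^ p * fpFun p δ + √δ * (Real.log δ ^ 2 / 4)) * ‖w‖ +
          1 / √δ * ‖yδ - T (cfc (fpFun p) (adjoint T ∘L T) w)‖ :=
        norm_cfc_fpFun_apply_sub_cfc_genFun_adjoint_apply_le T hT hp
          ⟨hδ.1, hδ.2.trans_lt hlt⟩ w yδ
    _ ≤ (2 ^ p * fpFun p δ + √δ * (Real.log δ ^ 2 / 4)) * ρ + 1 / √δ * δ := by gcongr
    _ = (2 ^ p * fpFun p δ + √δ * Real.log δ ^ 2 / 4) * ρ + √δ := by
        rw [one_div_mul_eq_div, Real.div_sqrt, mul_div_assoc]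
    _ ≤ (2 ^ p * fpFun p δ + fpFun p δ / 4) * ρ + fpFun p δ := by gcongr
    _ = ((2 ^ p + 1 / 4) * ρ + 1) * (-Real.log δ) ^ (-p) := by
        rw [fpFun]
        ring

/-- Let `p > 0`, `ρ > 0`, and let `x† = f_p(T*T)w` with `‖w‖ ≤ ρ`, where `T` is a
bounded injective operator between complex Hilbert spaces with `‖T*T‖ ≤ e⁻¹`.
Then there exist `C > 0` and `δ̄ ∈ (0,1)` such that for every `δ ∈ (0,δ̄]` and every
`y^δ` with `‖y^δ − T x†‖ ≤ δ`, the regularized solution `x(δ) = g_δ(T*T)T*y^δ`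
obtained with the a-priori parameter choice `α(δ) = δ` satisfies
`‖x† − x(δ)‖ ≤ C·(−log δ)^{−p}`. -/
theorem stmt10 {X Y : Type*} [NormedAddCommGroup X] [InnerProductSpace ℂ X]
    [CompleteSpace X] [NormedAddCommGroup Y] [InnerProductSpace ℂ Y] [CompleteSpace Y]
    (T : X →L[ℂ] Y) (hTinj : Function.Injective T)
    (hTnorm : ‖(adjoint T) ∘L T‖ ≤ Real.exp (-1))
    (p ρ : ℝ) (hp : 0 < p) (hρ : 0 < ρ)
    (w : X) (hw : ‖w‖ ≤ ρ) (xdag : X) (hxdag : xdag = cfc (fpFun p) ((adjoint T) ∘L T) w) :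
    ∃ C > (0 : ℝ), ∃ δbar ∈ Set.Ioo (0 : ℝ) 1, ∀ δ ∈ Set.Ioc (0 : ℝ) δbar, ∀ yδ : Y,
      ‖yδ - T xdag‖ ≤ δ →
        ‖xdag - cfc (genFun δ) ((adjoint T) ∘L T) ((adjoint T) yδ)‖ ≤
          C * (-Real.log δ) ^ (-p) := by
  obtain ⟨C, hC, δbar, hδbar, hrate⟩ := stmt10_general hp hρ
  exact ⟨C, hC, δbar, hδbar, fun δ hδ yδ ↦ hxdag ▸ hrate T hTnorm w hw δ hδ yδ⟩
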